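/- For every pair of real numbers a > 0 and b ≥ 0, the set of real numbers c for which there exists a nonzero entire function w satisfying w''(z) + (a·z⁴ + b·z² − c)·w(z) = 0 for all z ∈ ℂ, such that w has infinitely many zeros and all but finitely many zeros of w are real, is infinite. -/

import Mathlib

open Complex Polynomial

namespace Quartic

/-- coefficient families with infinite radius of convergence, locally uniformly in `c` -/
def Good (q : ℕ → ℝ → ℝ) : Prop :=
  (∀ n, Continuous (q n)) ∧
    ∀ C R : ℝ, 0 < R → ∃ M : ℝ, ∀ n c, |c| ≤ C → |q n c| * R ^ n ≤ M

/-- the power series with given coefficients -/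
noncomputable def ser (q : ℕ → ℝ → ℝ) (c : ℝ) (z : ℂ) : ℂ := ∑' n, (q n c : ℂ) * z ^ n

/-- coefficients of the derivative -/
def dq (q : ℕ → ℝ → ℝ) : ℕ → ℝ → ℝ := fun n c => ((n : ℝ) + 1) * q (n + 1) c

lemma Good.bound {q : ℕ → ℝ → ℝ} (h : Good q) (C R : ℝ) (hR : 0 < R) :
    ∃ u : ℕ → ℝ, Summable u ∧ ∀ n c (z : ℂ), |c| ≤ C → ‖z‖ ≤ R →
      ‖(q n c : ℂ) * z ^ n‖ ≤ u n := by
  obtain ⟨M, hM⟩ := h.2 C (2 * R) (by positivity)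
  refine ⟨fun n => M * (1 / 2) ^ n, (summable_geometric_two).mul_left M, ?_⟩
  intro n c z hc hz
  have h1 := hM n c hc
  rw [norm_mul, norm_pow, Complex.norm_real, Real.norm_eq_abs]
  have h2 : ‖z‖ ^ n ≤ R ^ n := pow_le_pow_left₀ (norm_nonneg _) hz n
  calc |q n c| * ‖z‖ ^ n ≤ |q n c| * R ^ n := by gcongr
    _ = (|q n c| * (2 * R) ^ n) * (1 / 2) ^ n := by
        rw [mul_assoc, ← mul_pow]; congr 2; ring
    _ ≤ M * (1 / 2) ^ n := by gcongr

lemma Good.dq {q : ℕ → ℝ → ℝ} (h : Good q) : Good (dq q) := by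
  refine ⟨fun n => continuous_const.mul (h.1 (n + 1)), ?_⟩
  intro C R hR
  obtain ⟨M, hM⟩ := h.2 C (2 * R) (by positivity)
  refine ⟨M / R, fun n c hc => ?_⟩
  have h1 := hM (n + 1) c hc
  have h2 : ((n : ℝ) + 1) ≤ 2 ^ (n + 1) := by
    have := (Nat.lt_two_pow_self (n := n + 1)).le
    exact_mod_cast this
  rw [le_div_iff₀ hR]
  simp only [Quartic.dq, abs_mul]
  rw [abs_of_nonneg (by positivity : (0 : ℝ) ≤ (n : ℝ) + 1)]
  calc ((n : ℝ) + 1) * |q (n + 1) c| * R ^ n * R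
      = ((n : ℝ) + 1) * (|q (n + 1) c| * R ^ (n + 1)) := by ring
    _ ≤ 2 ^ (n + 1) * (|q (n + 1) c| * R ^ (n + 1)) := by gcongr
    _ = |q (n + 1) c| * (2 * R) ^ (n + 1) := by rw [mul_pow]; ring
    _ ≤ M := h1

lemma Good.summable {q : ℕ → ℝ → ℝ} (h : Good q) (c : ℝ) (z : ℂ) :
    Summable (fun n => (q n c : ℂ) * z ^ n) := by
  obtain ⟨u, hu, hb⟩ := h.bound |c| (‖z‖ + 1) (by positivity)
  exact Summable.of_norm_bounded hu fun n => hb n c z le_rfl (by linarith)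

lemma Good.hasDerivAt {q : ℕ → ℝ → ℝ} (h : Good q) (c : ℝ) (z : ℂ) :
    HasDerivAt (ser q c) (ser (Quartic.dq q) c z) z := by
  obtain ⟨u, hu, hb⟩ := h.bound |c| (‖z‖ + 1) (by positivity)
  have hz : z ∈ Metric.ball (0 : ℂ) (‖z‖ + 1) := by simp
  have hd : ∀ n : ℕ, DifferentiableOn ℂ (fun z : ℂ => (q n c : ℂ) * z ^ n)
      (Metric.ball (0 : ℂ) (‖z‖ + 1)) := fun n => by fun_prop
  have hle : ∀ (n : ℕ) (w : ℂ), w ∈ Metric.ball (0 : ℂ) (‖z‖ + 1) →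
      ‖(q n c : ℂ) * w ^ n‖ ≤ u n := by
    intro n w hw
    exact hb n c w le_rfl (by simpa using (mem_ball_zero_iff.1 hw).le)
  have h1 := hasSum_deriv_of_summable_norm hu hd Metric.isOpen_ball hle hz
  have h2 := (differentiableOn_tsum_of_summable_norm hu hd Metric.isOpen_ball hle).differentiableAt
    (Metric.isOpen_ball.mem_nhds hz)
  have h3 := h2.hasDerivAt
  have h4 : deriv (fun w : ℂ => ∑' n, (q n c : ℂ) * w ^ n) z = ser (Quartic.dq q) c z := by
    rw [← h1.tsum_eq, h1.summable.tsum_eq_zero_add]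
    simp only [ser, Quartic.dq]
    simp only [pow_zero, mul_one, deriv_const', zero_add]
    congr 1
    ext n
    simp
    ring
  rw [h4] at h3
  exact h3

lemma Good.continuous {q : ℕ → ℝ → ℝ} (h : Good q) :
    Continuous (fun p : ℝ × ℂ => ser q p.1 p.2) := by
  rw [continuous_iff_continuousAt]
  rintro ⟨c, z⟩
  obtain ⟨u, hu, hb⟩ := h.bound (|c| + 1) (‖z‖ + 1) (by positivity)
  have hc : ContinuousOn (fun p : ℝ × ℂ => ∑' n, (q n p.1 : ℂ) * p.2 ^ n)
      {p : ℝ × ℂ | |p.1| < |c| + 1 ∧ ‖p.2‖ < ‖z‖ + 1} := by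
    refine continuousOn_tsum (fun n => ?_) hu ?_
    · have := h.1 n
      fun_prop
    · rintro n ⟨c', z'⟩ ⟨h1, h2⟩
      exact hb n c' z' h1.le h2.le
  refine hc.continuousAt (IsOpen.mem_nhds ?_ ?_)
  · exact (isOpen_lt (continuous_abs.comp continuous_fst) continuous_const).inter
      (isOpen_lt (continuous_norm.comp continuous_snd) continuous_const)
  · constructor <;> simp

lemma ser_conj (q : ℕ → ℝ → ℝ) (c : ℝ) (z : ℂ) :
    ser q c ((starRingEnd ℂ) z) = (starRingEnd ℂ) (ser q c z) := by
  simp only [ser]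
  rw [Complex.conj_tsum]
  congr 1; ext n; simp

/-- shifted coefficients of the even solution -/
noncomputable def dco (a b : ℝ) : ℕ → ℝ → ℝ
  | 0, _ => 0
  | 1, _ => 0
  | 2, _ => 0
  | 3, _ => 0
  | 4, _ => 1
  | 5, _ => 0
  | n + 6, c => (c * dco a b (n + 4) c - b * dco a b (n + 2) c - a * dco a b n c)
      / (((n : ℝ) + 2) * ((n : ℝ) + 1))

lemma dco_odd (a b c : ℝ) (n : ℕ) : dco a b (2 * n + 1) c = 0 := by
  induction n using Nat.strong_induction_on with
  | _ n ih =>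
    match n with
    | 0 => simp [dco]
    | 1 => simp [dco]
    | 2 => simp [dco]
    | n + 3 =>
      have h0 := ih n (by omega)
      have h1 := ih (n + 1) (by omega)
      have h2 := ih (n + 2) (by omega)
      have e : 2 * (n + 3) + 1 = (2 * n + 1) + 6 := by ring
      rw [e, dco]
      have e1 : 2 * n + 1 + 4 = 2 * (n + 2) + 1 := by ring
      have e2 : 2 * n + 1 + 2 = 2 * (n + 1) + 1 := by ring
      rw [e1, e2, h0, h1, h2]; simp

lemma dco_cont (a b : ℝ) (n : ℕ) : Continuous (dco a b n) := by
  induction n using Nat.strong_induction_on with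
  | _ n ih =>
    match n with
    | 0 => simpa [funext_iff, dco] using (continuous_const : Continuous fun _ : ℝ => (0 : ℝ))
    | 1 => exact (continuous_const : Continuous fun _ : ℝ => (0 : ℝ))
    | 2 => exact (continuous_const : Continuous fun _ : ℝ => (0 : ℝ))
    | 3 => exact (continuous_const : Continuous fun _ : ℝ => (0 : ℝ))
    | 4 => exact (continuous_const : Continuous fun _ : ℝ => (1 : ℝ))
    | 5 => exact (continuous_const : Continuous fun _ : ℝ => (0 : ℝ))
    | n + 6 =>
      have h0 := ih n (by omega)
      have h1 := ih (n + 2) (by omega)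
      have h2 := ih (n + 4) (by omega)
      have : dco a b (n + 6) = fun c => (c * dco a b (n + 4) c - b * dco a b (n + 2) c
          - a * dco a b n c) / (((n : ℝ) + 2) * ((n : ℝ) + 1)) := by
        ext c; rw [dco]
      rw [this]
      fun_prop

lemma dco_step (a b C R : ℝ) (hR : 0 < R) (n : ℕ) (c K : ℝ) (hc : |c| ≤ C)
    (h0 : |dco a b n c| * R ^ n ≤ K) (h2 : |dco a b (n + 2) c| * R ^ (n + 2) ≤ K)
    (h4 : |dco a b (n + 4) c| * R ^ (n + 4) ≤ K) :
    |dco a b (n + 6) c| * R ^ (n + 6) ≤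
      (C * R ^ 2 + |b| * R ^ 4 + |a| * R ^ 6) * K / ((n : ℝ) + 1) := by
  have hC : 0 ≤ C := (abs_nonneg _).trans hc
  have hK : 0 ≤ K := le_trans (by positivity) h0
  rw [dco, abs_div, abs_of_pos (by positivity : (0 : ℝ) < ((n : ℝ) + 2) * ((n : ℝ) + 1)),
    div_mul_eq_mul_div]
  have h : |c * dco a b (n + 4) c - b * dco a b (n + 2) c - a * dco a b n c| ≤
      C * |dco a b (n + 4) c| + |b| * |dco a b (n + 2) c| + |a| * |dco a b n c| := by
    refine (abs_sub _ _).trans ?_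
    refine add_le_add ((abs_sub _ _).trans ?_) (abs_mul _ _).le
    refine add_le_add ?_ (abs_mul _ _).le
    rw [abs_mul]; gcongr
  have h' : |c * dco a b (n + 4) c - b * dco a b (n + 2) c - a * dco a b n c| * R ^ (n + 6) ≤
      (C * R ^ 2 + |b| * R ^ 4 + |a| * R ^ 6) * K := by
    calc _ ≤ (C * |dco a b (n + 4) c| + |b| * |dco a b (n + 2) c| + |a| * |dco a b n c|)
          * R ^ (n + 6) := by gcongr
      _ = C * R ^ 2 * (|dco a b (n + 4) c| * R ^ (n + 4))
          + |b| * R ^ 4 * (|dco a b (n + 2) c| * R ^ (n + 2))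
          + |a| * R ^ 6 * (|dco a b n c| * R ^ n) := by ring
      _ ≤ C * R ^ 2 * K + |b| * R ^ 4 * K + |a| * R ^ 6 * K := by gcongr
      _ = _ := by ring
  refine div_le_div₀ (by positivity) h' (by positivity) ?_
  nlinarith [(Nat.cast_nonneg n : (0 : ℝ) ≤ n)]

lemma dco_bound (a b C R : ℝ) (hC : 0 ≤ C) (hR : 0 < R) :
    ∃ M : ℝ, ∀ n c, |c| ≤ C → |dco a b n c| * R ^ n ≤ M := by
  set S := C * R ^ 2 + |b| * R ^ 4 + |a| * R ^ 6 with hS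
  have hS0 : 0 ≤ S := by positivity
  have hA : ∀ n c, |c| ≤ C → |dco a b n c| * R ^ n ≤ R ^ 4 * (1 + S) ^ n := by
    intro n c hc
    induction n using Nat.strong_induction_on with
    | _ n ih =>
      match n with
      | 0 => simp [dco]; positivity
      | 1 => simp [dco]; positivity
      | 2 => simp [dco]; positivity
      | 3 => simp [dco]; positivity
      | 4 =>
        simp only [dco, abs_one, one_mul]
        have : 1 ≤ (1 + S) ^ 4 := one_le_pow₀ (by linarith)
        nlinarith [pow_pos hR 4]
      | 5 => simp [dco]; positivity
      | n + 6 =>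
        have m : ∀ k, k ≤ n + 5 → R ^ 4 * (1 + S) ^ k ≤ R ^ 4 * (1 + S) ^ (n + 5) := by
          intro k hk
          have := pow_le_pow_right₀ (by linarith : 1 ≤ 1 + S) hk
          gcongr
        have := dco_step a b C R hR n c (R ^ 4 * (1 + S) ^ (n + 5)) hc
          ((ih n (by omega)).trans (m _ (by omega)))
          ((ih (n + 2) (by omega)).trans (m _ (by omega)))
          ((ih (n + 4) (by omega)).trans (m _ (by omega)))
        refine this.trans ?_
        rw [← hS]
        have hp : 0 ≤ R ^ 4 * (1 + S) ^ (n + 5) := by positivity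
        refine (div_le_self (by positivity) (by linarith [(Nat.cast_nonneg n : (0 : ℝ) ≤ n)])).trans ?_
        rw [pow_succ (1 + S) (n + 5)]
        nlinarith
  obtain ⟨N, hN⟩ := exists_nat_ge S
  refine ⟨R ^ 4 * (1 + S) ^ (N + 6), ?_⟩
  intro n c hc
  induction n using Nat.strong_induction_on with
  | _ n ih =>
    by_cases hn : n ≤ N + 6
    · refine (hA n c hc).trans ?_
      have := pow_le_pow_right₀ (by linarith : 1 ≤ 1 + S) hn
      gcongr
    · obtain ⟨m, rfl⟩ : ∃ m, n = m + 6 := ⟨n - 6, by omega⟩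
      have := dco_step a b C R hR m c _ hc (ih m (by omega)) (ih (m + 2) (by omega))
        (ih (m + 4) (by omega))
      refine this.trans ?_
      rw [← hS, div_le_iff₀ (by positivity), mul_comm]
      have hm : (N : ℝ) ≤ m := by exact_mod_cast (by omega : N ≤ m)
      gcongr
      linarith

lemma dco_good (a b : ℝ) : Good (fun n => dco a b (n + 4)) := by
  refine ⟨fun n => dco_cont a b _, fun C R hR => ?_⟩
  by_cases hC : 0 ≤ C
  · obtain ⟨M, hM⟩ := dco_bound a b C R hC hR
    refine ⟨M / R ^ 4, fun n c hc => ?_⟩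
    rw [le_div_iff₀ (by positivity), mul_assoc, ← pow_add]
    exact hM _ c hc
  · exact ⟨0, fun n c hc => absurd ((abs_nonneg c).trans hc) hC⟩

lemma ser_shift (q : ℕ → ℝ → ℝ) (h : Good fun n => q (n + 2)) (c : ℝ) (z : ℂ)
    (h0 : q 0 c = 0) (h1 : q 1 c = 0) :
    HasSum (fun n => (q n c : ℂ) * z ^ n) (z ^ 2 * ser (fun n => q (n + 2)) c z) := by
  rw [← hasSum_nat_add_iff' 2]
  have := ((h.summable c z).hasSum).mul_left (z ^ 2)
  simp only [Finset.sum_range_succ, Finset.sum_range_zero, h0, h1]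
  simp only [ofReal_zero, zero_mul, add_zero, sub_zero]
  have e : (fun n => (q (n + 2) c : ℂ) * z ^ (n + 2)) =
      fun i => z ^ 2 * ((q (i + 2) c : ℂ) * z ^ i) := by
    ext n; ring
  rw [e]
  exact this

theorem exists_family (a b : ℝ) : ∃ W W1 : ℝ → ℂ → ℂ,
    (∀ c z, HasDerivAt (W c) (W1 c z) z) ∧
    (∀ c z, HasDerivAt (W1 c) (-((a : ℂ) * z ^ 4 + (b : ℂ) * z ^ 2 - (c : ℂ)) * W c z) z) ∧
    Continuous (fun p : ℝ × ℂ => W p.1 p.2) ∧ Continuous (fun p : ℝ × ℂ => W1 p.1 p.2) ∧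
    (∀ c, W c 0 = 1) ∧ (∀ c, W1 c 0 = 0) ∧
    (∀ c z, W c ((starRingEnd ℂ) z) = (starRingEnd ℂ) (W c z)) ∧
    (∀ c z, W1 c ((starRingEnd ℂ) z) = (starRingEnd ℂ) (W1 c z)) ∧
    (∀ c z, W c (-z) = W c z) ∧ (∀ c z, W1 c (-z) = - W1 c z) := by
  set q : ℕ → ℝ → ℝ := fun n => dco a b (n + 4) with hq
  have hg : Good q := dco_good a b
  have heven : ∀ c z, ser q c (-z) = ser q c z := by
    intro c z
    simp only [ser]
    congr 1; ext n
    rcases Nat.even_or_odd n with he | ho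
    · rw [he.neg_pow]
    · obtain ⟨k, rfl⟩ := ho
      have : q (2 * k + 1) c = 0 := by
        simp only [hq]
        rw [show 2 * k + 1 + 4 = 2 * (k + 2) + 1 by ring]
        exact dco_odd a b c _
      simp [this]
  refine ⟨ser q, ser (dq q), hg.hasDerivAt, ?_, hg.continuous, hg.dq.continuous, ?_, ?_,
    ser_conj _, ser_conj _, heven, ?_⟩
  · intro c z
    have h := hg.dq.hasDerivAt c z
    convert h using 1
    have s4 := (hg.summable c z).hasSum
    have g2 : Good (fun n => (fun n => dco a b (n + 2)) (n + 2)) := hg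
    have s2 := ser_shift (fun n => dco a b (n + 2)) g2 c z (by simp [dco]) (by simp [dco])
    have g0' : Good (fun n => dco a b (n + 2)) := by
      refine ⟨fun n => dco_cont a b _, fun C R hR => ?_⟩
      by_cases hC : 0 ≤ C
      · obtain ⟨M, hM⟩ := dco_bound a b C R hC hR
        refine ⟨M / R ^ 2, fun n c hc => ?_⟩
        rw [le_div_iff₀ (by positivity), mul_assoc, ← pow_add]
        exact hM _ c hc
      · exact ⟨0, fun n c hc => absurd ((abs_nonneg c).trans hc) hC⟩
    have s0 := ser_shift (dco a b) g0' c z (by simp [dco]) (by simp [dco])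
    have e0 : ser (fun n => dco a b (n + 2)) c z = z ^ 2 * ser q c z := s2.tsum_eq
    rw [e0] at s0
    have hs := ((s4.mul_left (c : ℂ)).sub (s2.mul_left (b : ℂ))).sub (s0.mul_left (a : ℂ))
    have e : ser (dq (dq q)) c z = (c : ℂ) * (∑' n, (q n c : ℂ) * z ^ n) -
        (b : ℂ) * (z ^ 2 * ser q c z) - (a : ℂ) * (z ^ 2 * (z ^ 2 * ser q c z)) := by
      rw [← (show _ = _ from hs.tsum_eq)]
      simp only [ser]
      congr 1
      ext n
      have : dq (dq q) n c = c * dco a b (n + 4) c - b * dco a b (n + 2) c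
          - a * dco a b n c := by
        simp only [dq, hq]
        rw [show n + 1 + 1 + 4 = n + 6 by ring, dco]
        push_cast
        field_simp
        ring
      rw [this]
      push_cast
      simp only [hq]
      ring
    rw [e]
    change _ = (c : ℂ) * ser q c z - _ - _
    ring
  · intro c
    have : ∀ n, n ≠ 0 → (q n c : ℂ) * (0 : ℂ) ^ n = 0 := by
      intro n hn; simp [hn]
    simp only [ser]
    rw [tsum_eq_single 0 this]
    simp [hq, dco]
  · intro c
    have : ∀ n, n ≠ 0 → (dq q n c : ℂ) * (0 : ℂ) ^ n = 0 := by
      intro n hn; simp [hn]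
    simp only [ser]
    rw [tsum_eq_single 0 this]
    simp [hq, dq, dco]
  · intro c z
    have h1 := hg.hasDerivAt c z
    have h2 : HasDerivAt (fun z => ser q c (-z)) (ser (dq q) c (-z) * (-1)) z :=
      HasDerivAt.comp z (hg.hasDerivAt c (-z)) (hasDerivAt_neg z)
    simp only [heven] at h2
    have := h2.unique h1
    rw [← this]; ring


lemma ode_unique {𝕜 : Type*} [RCLike 𝕜] {g h V : ℝ → 𝕜}
    (hg : ∀ t, HasDerivAt g (h t) t)
    (hh : ∀ t, HasDerivAt h (V t * g t) t) (hV : Continuous V) (t₀ : ℝ) (h0 : g t₀ = 0)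
    (h1 : h t₀ = 0) (t : ℝ) : g t = 0 := by
  obtain ⟨K, hK⟩ : ∃ K : NNReal, ∀ s ∈ Set.Icc (-(|t| + |t₀| + 1)) (|t| + |t₀| + 1), ‖V s‖ ≤ K := by
    obtain ⟨C, hC⟩ := (isCompact_Icc (a := -(|t| + |t₀| + 1)) (b := |t| + |t₀| + 1)).exists_bound_of_continuousOn
      hV.continuousOn
    exact ⟨C.toNNReal, fun s hs => (hC s hs).trans (Real.le_coe_toNNReal C)⟩
  have ht0 : t₀ ∈ Set.Ioo (-(|t| + |t₀| + 1)) (|t| + |t₀| + 1) := by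
    constructor <;> linarith [neg_abs_le t₀, le_abs_self t₀, abs_nonneg t]
  have ht : t ∈ Set.Icc (-(|t| + |t₀| + 1)) (|t| + |t₀| + 1) := by
    constructor <;> linarith [neg_abs_le t, le_abs_self t, abs_nonneg t₀]
  have key := ODE_solution_unique_of_mem_Icc (E := 𝕜 × 𝕜) (v := fun s x => (x.2, V s * x.1))
    (s := fun _ => Set.univ) (K := 1 + K) (f := fun s => (g s, h s)) (g := fun _ => 0)
    (a := -(|t| + |t₀| + 1)) (b := |t| + |t₀| + 1) (t₀ := t₀) (by
      intro s hs
      rw [lipschitzOnWith_univ]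
      refine LipschitzWith.of_dist_le_mul fun x x' => ?_
      have hv := hK s ⟨hs.1.le, hs.2.le⟩
      simp only [dist_eq_norm, Prod.mk_sub_mk, Prod.norm_mk]
      have e1 : ‖(x - x').1‖ ≤ ‖x - x'‖ := norm_fst_le _
      have e2 : ‖(x - x').2‖ ≤ ‖x - x'‖ := norm_snd_le _
      rw [Prod.fst_sub] at e1
      rw [Prod.snd_sub] at e2
      have hn := norm_nonneg (x - x')
      have hk : (0 : ℝ) ≤ K := K.2
      push_cast
      refine max_le ?_ ?_
      · nlinarith [mul_nonneg hk hn]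
      · rw [← mul_sub, norm_mul]
        have := mul_le_mul hv e1 (norm_nonneg _) hk
        nlinarith) ht0
    (fun s _ => ((hg s).prodMk (hh s)).continuousAt.continuousWithinAt)
    (fun s _ => (hg s).prodMk (hh s)) (fun _ _ => Set.mem_univ _)
    continuousOn_const (fun s _ => by
      exact (hasDerivAt_const s (0 : 𝕜 × 𝕜)).congr_deriv (by ext <;> simp)) (fun _ _ => Set.mem_univ _) (by simp [h0, h1])
  have := key ht
  simpa using congrArg Prod.fst this

lemma not_both_zero {y p V : ℝ → ℝ} (hy : ∀ t, HasDerivAt y (p t) t)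
    (hp : ∀ t, HasDerivAt p (V t * y t) t) (hV : Continuous V)
    (h0 : y 0 ≠ 0) (t : ℝ) : 0 < y t ^ 2 + p t ^ 2 := by
  by_contra hcon
  push Not at hcon
  have h1 : y t = 0 := by nlinarith [sq_nonneg (y t), sq_nonneg (p t)]
  have h2 : p t = 0 := by nlinarith [sq_nonneg (y t), sq_nonneg (p t)]
  exact h0 (ode_unique hy hp hV t h1 h2 0)

/-- Shooting with the Prüfer angle. -/
theorem shooting (a b : ℝ) (ha : 0 < a) (hb : 0 ≤ b) (y p : ℝ → ℝ → ℝ)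
    (hy : ∀ c t, HasDerivAt (y c) (p c t) t)
    (hp : ∀ c t, HasDerivAt (p c) ((a * t ^ 4 - b * t ^ 2 - c) * y c t) t)
    (hyc : Continuous (fun x : ℝ × ℝ => y x.1 x.2))
    (hpc : Continuous (fun x : ℝ × ℝ => p x.1 x.2))
    (hy0 : ∀ c, y c 0 = 1) (hp0 : ∀ c, p c 0 = 0) (c₀ : ℝ) :
    ∃ c, c₀ < c ∧ ∃ T, ∀ t, T ≤ t → y c t * p c t < 0 := by
  have hpos : ∀ c t, 0 < y c t ^ 2 + p c t ^ 2 := fun c t =>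
    not_both_zero (hy c) (hp c) (by fun_prop) (by rw [hy0]; exact one_ne_zero) t
  set f : ℝ → ℝ → ℝ := fun c t =>
    (p c t ^ 2 - (a * t ^ 4 - b * t ^ 2 - c) * y c t ^ 2) / (y c t ^ 2 + p c t ^ 2) with hf
  have hfc : Continuous f.uncurry := by
    simp only [hf, Function.uncurry_def]
    refine Continuous.div (by fun_prop) (by fun_prop) fun x => (hpos _ _).ne'
  set θ : ℝ → ℝ → ℝ := fun c t => Real.pi / 2 + ∫ s in (0 : ℝ)..t, f c s with hθ
  have hfc1 : ∀ c, Continuous (f c) := fun c => hfc.comp (by fun_prop : Continuous fun t => (c, t))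
  have hθd : ∀ c t, HasDerivAt (θ c) (f c t) t := by
    intro c t
    exact (intervalIntegral.integral_hasDerivAt_right ((hfc1 c).intervalIntegrable _ _)
      ((hfc1 c).stronglyMeasurableAtFilter _ _) (hfc1 c).continuousAt).const_add _
  have hθc : ∀ t, Continuous (fun c => θ c t) := by
    intro t
    exact continuous_const.add
      (intervalIntegral.continuous_parametric_intervalIntegral_of_continuous hfc continuous_const)
  have hθ0 : ∀ c, θ c 0 = Real.pi / 2 := fun c => by simp [hθ]
  -- the angle relation
  have hG : ∀ c t, y c t * Real.cos (θ c t) - p c t * Real.sin (θ c t) = 0 := by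
    intro c t
    set G : ℝ → ℝ := fun t => y c t * Real.cos (θ c t) - p c t * Real.sin (θ c t) with hGdef
    have hGd : ∀ t, HasDerivAt (fun t => G t ^ 2 / (y c t ^ 2 + p c t ^ 2)) 0 t := by
      intro t
      have h1 : HasDerivAt G _ t := ((hy c t).mul (hθd c t).cos).sub ((hp c t).mul (hθd c t).sin)
      have h2 : HasDerivAt (fun t => y c t ^ 2 + p c t ^ 2) _ t :=
        ((hy c t).pow 2).add ((hp c t).pow 2)
      have h3 := (h1.pow 2).div h2 (hpos c t).ne'
      refine h3.congr_deriv ?_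
      have hne := (hpos c t).ne'
      rw [div_eq_zero_iff]; left
      simp only [hf, hGdef, Pi.pow_apply]
      field_simp
      ring
    have hconst := is_const_of_deriv_eq_zero (fun t => (hGd t).differentiableAt)
      (fun t => (hGd t).deriv) t 0
    have h00 : G 0 = 0 := by simp [hGdef, hθ0, hp0]
    simp only [h00] at hconst
    have hne := (hpos c t).ne'
    have : G t ^ 2 = 0 := by
      have : G t ^ 2 / (y c t ^ 2 + p c t ^ 2) = 0 := by rw [hconst]; simp
      rcases div_eq_zero_iff.1 this with h | h
      · exact h
      · exact absurd h hne
    exact pow_eq_zero_iff (two_ne_zero) |>.1 this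
  have hH : ∀ c t, ∃ H : ℝ, H ≠ 0 ∧ y c t = H * Real.sin (θ c t) ∧ p c t = H * Real.cos (θ c t) := by
    intro c t
    have hg := hG c t
    have hs := Real.sin_sq_add_cos_sq (θ c t)
    have e1 : y c t = (y c t * Real.sin (θ c t) + p c t * Real.cos (θ c t)) * Real.sin (θ c t) := by
      linear_combination (-(y c t)) * hs + Real.cos (θ c t) * hg
    have e2 : p c t = (y c t * Real.sin (θ c t) + p c t * Real.cos (θ c t)) * Real.cos (θ c t) := by
      linear_combination (-(p c t)) * hs - Real.sin (θ c t) * hg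
    refine ⟨_, ?_, e1, e2⟩
    intro h0
    rw [h0] at e1 e2
    have := hpos c t
    rw [e1, e2] at this
    simp at this
  have hfθ : ∀ c t, f c t = Real.cos (θ c t) ^ 2
      - (a * t ^ 4 - b * t ^ 2 - c) * Real.sin (θ c t) ^ 2 := by
    intro c t
    obtain ⟨H, hH0, e1, e2⟩ := hH c t
    have hs := Real.sin_sq_add_cos_sq (θ c t)
    simp only [hf]
    rw [e1, e2, div_eq_iff (by
      have := (hpos c t).ne'
      rwa [e1, e2] at this)]
    linear_combination (-(H ^ 2 * (Real.cos (θ c t) ^ 2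
      - (a * t ^ 4 - b * t ^ 2 - c) * Real.sin (θ c t) ^ 2))) * hs
  have hcont : ∀ c, Continuous (θ c) := fun c =>
    continuous_iff_continuousAt.2 fun t => (hθd c t).continuousAt
  -- the angle does not go back through multiples of π
  have hlow : ∀ c (k : ℤ) t₁ t, t₁ ≤ t → k * Real.pi ≤ θ c t₁ → k * Real.pi ≤ θ c t := by
    intro c k t₁ t ht h1
    refine image_le_of_deriv_right_lt_deriv_boundary (f := fun _ => k * Real.pi) (f' := fun _ => 0)
      (a := t₁) (b := t) continuousOn_const (fun x _ => hasDerivWithinAt_const _ _ _) h1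
      (hθd c) ?_ ⟨ht, le_rfl⟩
    intro x _ hx
    rw [hfθ, ← hx, Real.sin_int_mul_pi]
    have := Real.sin_sq_add_cos_sq (k * Real.pi)
    rw [Real.sin_int_mul_pi] at this
    nlinarith
  have hVmono : ∀ c t s, 0 < t → b < a * t ^ 2 → c < t ^ 2 * (a * t ^ 2 - b) → t ≤ s →
      0 < a * s ^ 4 - b * s ^ 2 - c := by
    intro c t s h0 h1 h2 h3
    have h4 : t ^ 2 ≤ s ^ 2 := by gcongr
    have h5 : a * t ^ 2 ≤ a * s ^ 2 := by gcongr
    have h6 : t ^ 2 * (a * t ^ 2 - b) ≤ s ^ 2 * (a * s ^ 2 - b) :=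
      mul_le_mul h4 (by linarith) (by linarith) (by positivity)
    nlinarith
  have hup : ∀ c (k : ℤ) t₁ t, 0 < t₁ → b < a * t₁ ^ 2 → c < t₁ ^ 2 * (a * t₁ ^ 2 - b) → t₁ ≤ t →
      θ c t₁ ≤ k * Real.pi + Real.pi / 2 → θ c t ≤ k * Real.pi + Real.pi / 2 := by
    intro c k t₁ t h0 hb1 hc1 ht h1
    refine image_le_of_deriv_right_lt_deriv_boundary (f := θ c) (f' := f c)
      (B := fun _ => k * Real.pi + Real.pi / 2) (B' := fun _ => 0)
      (a := t₁) (b := t) (hcont c).continuousOn (fun x _ => (hθd c x).hasDerivWithinAt) h1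
      (fun x => hasDerivAt_const _ _) ?_ ⟨ht, le_rfl⟩
    intro x hx he
    have hV := hVmono c t₁ x h0 hb1 hc1 hx.1
    have hcos : Real.cos (k * Real.pi + Real.pi / 2) = 0 := by
      rw [Real.cos_add_pi_div_two, Real.sin_int_mul_pi, neg_zero]
    have := Real.sin_sq_add_cos_sq (k * Real.pi + Real.pi / 2)
    rw [hfθ, he, hcos]
    rw [hcos] at this
    nlinarith
  by_contra hno
  push Not at hno
  set P : ℤ → Set ℝ := fun k => {c | ∃ t, 0 < t ∧ b < a * t ^ 2 ∧ c < t ^ 2 * (a * t ^ 2 - b) ∧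
    k * Real.pi < θ c t ∧ θ c t < k * Real.pi + Real.pi / 2} with hP
  have hPopen : ∀ k, IsOpen (P k) := by
    intro k
    have : P k = ⋃ t : ℝ, {c | 0 < t ∧ b < a * t ^ 2 ∧ c < t ^ 2 * (a * t ^ 2 - b) ∧
      k * Real.pi < θ c t ∧ θ c t < k * Real.pi + Real.pi / 2} := by
      ext c; simp [hP]
    rw [this]
    refine isOpen_iUnion fun t => ?_
    have h1 := hθc t
    exact isOpen_const.and (isOpen_const.and ((isOpen_lt continuous_id continuous_const).and
      ((isOpen_lt continuous_const h1).and (isOpen_lt h1 continuous_const))))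
  have hPev : ∀ k c, c ∈ P k → ∃ T, ∀ t, T ≤ t →
      k * Real.pi ≤ θ c t ∧ θ c t ≤ k * Real.pi + Real.pi / 2 := by
    rintro k c ⟨t₁, h0, h1, h2, h3, h4⟩
    exact ⟨t₁, fun t ht => ⟨hlow c k t₁ t ht h3.le, hup c k t₁ t h0 h1 h2 ht h4.le⟩⟩
  have hPdisj : ∀ k j c, c ∈ P k → c ∈ P j → k ≤ j := by
    intro k j c hk hj
    obtain ⟨T1, h1⟩ := hPev k c hk
    obtain ⟨T2, h2⟩ := hPev j c hj
    have h3 := (h1 (max T1 T2) (le_max_left _ _)).1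
    have h4 := (h2 (max T1 T2) (le_max_right _ _)).2
    by_contra hlt
    push Not at hlt
    have : (j : ℝ) + 1 ≤ k := by exact_mod_cast hlt
    nlinarith [Real.pi_pos]
  have hcover : ∀ c, c₀ < c → ∃ k, c ∈ P k := by
    intro c hc
    -- a threshold for V > 0
    obtain ⟨T, hT0, hT1, hT2⟩ : ∃ T : ℝ, 0 < T ∧ b < a * T ^ 2 ∧ c < T ^ 2 * (a * T ^ 2 - b) := by
      refine ⟨1 + (b + 1 + |c|) / a, by positivity, ?_, ?_⟩
      · have h1 : 0 ≤ (b + 1 + |c|) / a := by positivity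
        have h2 : a * ((b + 1 + |c|) / a) = b + 1 + |c| := by field_simp
        nlinarith [abs_nonneg c, mul_nonneg ha.le (mul_nonneg h1 h1)]
      · have h1 : 0 ≤ (b + 1 + |c|) / a := by positivity
        have h2 : a * ((b + 1 + |c|) / a) = b + 1 + |c| := by field_simp
        set u := (b + 1 + |c|) / a
        have h3 : 1 + |c| ≤ a * (1 + u) ^ 2 - b := by
          nlinarith [abs_nonneg c, mul_nonneg ha.le (mul_nonneg h1 h1)]
        have h4 : 1 ≤ (1 + u) ^ 2 := by nlinarith
        have h5 : 1 * (1 + |c|) ≤ (1 + u) ^ 2 * (a * (1 + u) ^ 2 - b) :=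
          mul_le_mul h4 h3 (by positivity) (by positivity)
        linarith [le_abs_self c]
    obtain ⟨t₁, ht1, h1⟩ := hno c hc T
    -- y p is strictly increasing on [T, ∞)
    have hmono : y c t₁ * p c t₁ < y c (t₁ + 1) * p c (t₁ + 1) := by
      have hd : ∀ t, HasDerivAt (fun t => y c t * p c t) _ t := fun t => (hy c t).mul (hp c t)
      have := strictMonoOn_of_deriv_pos (convex_Icc t₁ (t₁ + 1))
        (f := fun t => y c t * p c t)
        (fun t _ => (hd t).continuousAt.continuousWithinAt) (by
          intro t ht
          rw [interior_Icc] at ht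
          rw [(hd t).deriv]
          have hV := hVmono c T t hT0 hT1 hT2 (by linarith [ht.1])
          have hpo := hpos c t
          by_cases hyz : y c t = 0
          · rw [hyz] at hpo ⊢
            nlinarith
          · have : 0 < y c t ^ 2 := by positivity
            nlinarith [mul_pos hV this, sq_nonneg (p c t)])
      exact this ⟨le_rfl, by linarith⟩ ⟨by linarith, le_rfl⟩ (by linarith)
    obtain ⟨t₂, ht2, h2⟩ : ∃ t₂, T ≤ t₂ ∧ 0 < y c t₂ * p c t₂ := ⟨t₁ + 1, by linarith, by linarith⟩
    obtain ⟨H, hH0, e1, e2⟩ := hH c t₂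
    rw [e1, e2] at h2
    have h3 : 0 < Real.sin (θ c t₂) * Real.cos (θ c t₂) := by
      have : 0 < H ^ 2 := by positivity
      by_contra hneg
      push Not at hneg
      nlinarith
    have h4 : 0 < Real.sin (2 * θ c t₂) := by rw [Real.sin_two_mul]; linarith
    set k := ⌊θ c t₂ / Real.pi⌋ with hk
    have hpi := Real.pi_pos
    have hk1 : (k : ℝ) * Real.pi ≤ θ c t₂ := by
      have := Int.floor_le (θ c t₂ / Real.pi)
      rwa [le_div_iff₀ hpi] at this
    have hk2 : θ c t₂ < ((k : ℝ) + 1) * Real.pi := by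
      have := Int.lt_floor_add_one (θ c t₂ / Real.pi)
      rwa [div_lt_iff₀ hpi] at this
    set φ := θ c t₂ - k * Real.pi with hφ
    have h5 : Real.sin (2 * θ c t₂) = Real.sin (2 * φ) := by
      rw [show 2 * θ c t₂ = 2 * φ + k * (2 * Real.pi) by rw [hφ]; ring, Real.sin_add_int_mul_two_pi]
    rw [h5] at h4
    refine ⟨k, t₂, by linarith, ?_, ?_, ?_, ?_⟩
    · have : T ^ 2 ≤ t₂ ^ 2 := by gcongr
      nlinarith
    · have := hVmono c T t₂ hT0 hT1 hT2 ht2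
      nlinarith
    · rcases hk1.lt_or_eq with h | h
      · exact h
      · have : φ = 0 := by rw [hφ, ← h]; ring
        rw [this] at h4; simp at h4
    · by_contra hcon
      push Not at hcon
      have : Real.sin (2 * φ) ≤ 0 := by
        have : Real.sin (2 * φ) = - Real.sin (2 * φ - Real.pi) := by rw [Real.sin_sub_pi, neg_neg]
        rw [this]
        have := Real.sin_nonneg_of_nonneg_of_le_pi (x := 2 * φ - Real.pi) (by rw [hφ]; linarith)
          (by rw [hφ]; linarith)
        linarith
      linarith
  obtain ⟨k, hk⟩ := hcover (c₀ + 1) (by linarith)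
  have hall : ∀ c, c₀ < c → c ∈ P k := by
    have hpre : IsPreconnected (Set.Ioi c₀) := isPreconnected_Ioi
    by_contra hne
    push Not at hne
    obtain ⟨c, hc, hck⟩ := hne
    obtain ⟨j, hj⟩ := hcover c hc
    have hjk : j ≠ k := by rintro rfl; exact hck hj
    obtain ⟨x, hx, hx1, hx2⟩ := hpre (P k) (⋃ j : {j : ℤ // j ≠ k}, P j) (hPopen k)
      (isOpen_iUnion fun j => hPopen _) (by
        intro x hx
        obtain ⟨i, hi⟩ := hcover x hx
        by_cases h : i = k
        · left; rwa [← h]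
        · right; exact Set.mem_iUnion.2 ⟨⟨i, h⟩, hi⟩)
      ⟨c₀ + 1, by simp, hk⟩ ⟨c, hc, Set.mem_iUnion.2 ⟨⟨j, hjk⟩, hj⟩⟩
    obtain ⟨⟨i, hi⟩, hxi⟩ := Set.mem_iUnion.1 hx2
    exact hi (le_antisymm (hPdisj i k x hxi hx1) (hPdisj k i x hx1 hxi))
  -- many rotations for large c
  set L : ℝ := (|(k : ℝ)| + 1) * Real.pi with hL
  have hL0 : 0 < L := by have := Real.pi_pos; positivity
  set c : ℝ := |c₀| + 1 + a * L ^ 4 with hc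
  have hcc : c₀ < c := by
    have : 0 < a * L ^ 4 := by positivity
    linarith [le_abs_self c₀]
  have hrot : L ≤ θ c L := by
    have := image_le_of_deriv_right_le_deriv_boundary (f := fun t => t) (f' := fun _ => 1)
      (a := 0) (b := L) (B := θ c) (B' := f c) continuousOn_id
      (fun x _ => (hasDerivAt_id x).hasDerivWithinAt) (by rw [hθ0]; have := Real.pi_pos; positivity)
      (hcont c).continuousOn (fun x _ => (hθd c x).hasDerivWithinAt) (by
        intro x hx
        rw [hfθ]
        have h1 : x ^ 4 ≤ L ^ 4 := pow_le_pow_left₀ hx.1 hx.2.le 4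
        have h2 : a * x ^ 4 ≤ a * L ^ 4 := by gcongr
        have h3 : 0 ≤ b * x ^ 2 := by positivity
        have h4 : 1 ≤ -(a * x ^ 4 - b * x ^ 2 - c) := by linarith [abs_nonneg c₀]
        have hs := Real.sin_sq_add_cos_sq (θ c x)
        nlinarith [sq_nonneg (Real.sin (θ c x))])
    exact this ⟨hL0.le, le_rfl⟩
  obtain ⟨T, hT⟩ := hPev k c (hall c hcc)
  have h1 := (hT (max T L) (le_max_left _ _)).2
  have h2 := hlow c (k + 1) L (max T L) (le_max_right _ _) (by
    refine le_trans ?_ hrot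
    rw [hL]; push_cast
    have := Real.pi_pos
    gcongr
    exact le_abs_self _)
  push_cast at h2
  nlinarith [Real.pi_pos]


lemma hasDerivAt_re {g : ℝ → ℂ} {g' : ℂ} {t : ℝ} (h : HasDerivAt g g' t) :
    HasDerivAt (fun s => (g s).re) g'.re t :=
  Complex.reCLM.hasFDerivAt.comp_hasDerivAt t h

lemma hasDerivAt_im {g : ℝ → ℂ} {g' : ℂ} {t : ℝ} (h : HasDerivAt g g' t) :
    HasDerivAt (fun s => (g s).im) g'.im t :=
  Complex.imCLM.hasFDerivAt.comp_hasDerivAt t h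

/-- composition with an affine real line in the complex plane -/
lemma hasDerivAt_line {f : ℂ → ℂ} {f' : ℂ} (z₀ u : ℂ) (s : ℝ)
    (h : HasDerivAt f f' (z₀ + s * u)) :
    HasDerivAt (fun s : ℝ => f (z₀ + s * u)) (f' * u) s := by
  have h1 : HasDerivAt (fun s : ℝ => z₀ + (s : ℂ) * u) u s := by
    have := ((Complex.ofRealCLM.hasDerivAt (x := s)).mul_const u).const_add z₀
    simpa using this
  exact HasDerivAt.comp s h h1

lemma sector_real (a b c X Y A B A1 B1 : ℝ) (ha : 0 < a) (hb : 0 ≤ b)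
    (hY : 0 ≤ Y) (hYX : Y ≤ 6 / 5 * X) (h1 : 1 ≤ X ^ 2 + Y ^ 2)
    (h2 : 42 + 6 * |c| ≤ a * (X ^ 2 + Y ^ 2) ^ 2)
    (hne : 0 < A ^ 2 + B ^ 2 + A1 ^ 2 + B1 ^ 2) :
    -(a * (X ^ 2 + Y ^ 2) ^ 2 * (2 * (X ^ 2 + X * Y - Y ^ 2)) + 2 * b * (X ^ 2 + Y ^ 2) ^ 2
        - c * (2 * (X ^ 2 - Y ^ 2) - 2 * X * Y)) * (A ^ 2 + B ^ 2)
      - (2 * (X ^ 2 + X * Y - Y ^ 2)) * (A1 ^ 2 + B1 ^ 2)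
      + 2 * (B1 * (A * (X - 2 * Y) - B * (Y + 2 * X)) - A1 * (A * (Y + 2 * X) + B * (X - 2 * Y)))
      < 0 := by
  set r := X ^ 2 + Y ^ 2 with hr
  set D := 2 * (X ^ 2 + X * Y - Y ^ 2) with hD
  have hX : 0 ≤ X := by linarith
  have hDr : r / 2 ≤ D := by
    rw [hr, hD]
    nlinarith [mul_nonneg hY (sub_nonneg.2 hYX), mul_nonneg hX (sub_nonneg.2 hYX)]
  have hD' : |2 * (X ^ 2 - Y ^ 2) - 2 * X * Y| ≤ 3 * r := by
    rw [abs_le, hr]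
    constructor <;> nlinarith [sq_nonneg (X - Y), sq_nonneg (X + Y), sq_nonneg X, sq_nonneg Y]
  have hcD : c * (2 * (X ^ 2 - Y ^ 2) - 2 * X * Y) ≤ |c| * (3 * r) := by
    refine (le_abs_self _).trans ?_
    rw [abs_mul]; gcongr
  have hr2 : 0 ≤ a * r ^ 2 := by positivity
  have hcoef : 21 * r ≤ a * r ^ 2 * D + 2 * b * r ^ 2 - c * (2 * (X ^ 2 - Y ^ 2) - 2 * X * Y) := by
    have e1 : a * r ^ 2 * (r / 2) ≤ a * r ^ 2 * D := by gcongr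
    have e2 : 0 ≤ 2 * b * r ^ 2 := by positivity
    have e3 : (42 + 6 * |c|) * (r / 2) ≤ a * r ^ 2 * (r / 2) := by gcongr
    nlinarith
  have hN : 21 * r * (A ^ 2 + B ^ 2) ≤ (a * r ^ 2 * D + 2 * b * r ^ 2
      - c * (2 * (X ^ 2 - Y ^ 2) - 2 * X * Y)) * (A ^ 2 + B ^ 2) := by gcongr
  have hN1 : 1 / 2 * (A1 ^ 2 + B1 ^ 2) ≤ D * (A1 ^ 2 + B1 ^ 2) := by
    gcongr; linarith
  have hq : (A * (X - 2 * Y) - B * (Y + 2 * X)) ^ 2 + (A * (Y + 2 * X) + B * (X - 2 * Y)) ^ 2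
      = 5 * r * (A ^ 2 + B ^ 2) := by rw [hr]; ring
  have hrN : A ^ 2 + B ^ 2 ≤ r * (A ^ 2 + B ^ 2) := by
    have : 0 ≤ A ^ 2 + B ^ 2 := by positivity
    nlinarith
  set q1 := A * (X - 2 * Y) - B * (Y + 2 * X)
  set q2 := A * (Y + 2 * X) + B * (X - 2 * Y)
  have s1 := sq_nonneg (B1 / 2 - 2 * q1)
  have s2 := sq_nonneg (A1 / 2 + 2 * q2)
  nlinarith [sq_nonneg A, sq_nonneg B, sq_nonneg A1, sq_nonneg B1]

set_option maxHeartbeats 2000000 in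
/-- Real solutions have no zeros in a sector near the positive ray off the real axis. -/
theorem sector (a b c : ℝ) (ha : 0 < a) (hb : 0 ≤ b) (w w1 : ℂ → ℂ)
    (hw : ∀ z, HasDerivAt w (w1 z) z)
    (hw1 : ∀ z, HasDerivAt w1 (-((a : ℂ) * z ^ 4 + (b : ℂ) * z ^ 2 - (c : ℂ)) * w z) z)
    (hne : ∀ z, w z = 0 → w1 z ≠ 0)
    (hr : ∀ x : ℝ, (w x).im = 0) (hr1 : ∀ x : ℝ, (w1 x).im = 0) :
    ∃ X : ℝ, ∀ x y : ℝ, X ≤ x → 0 < y → y ≤ 6 / 5 * x → w (x + y * I) ≠ 0 := by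
  set m : ℝ := 1 + (42 + 6 * |c|) / a with hm
  have hm1 : 1 ≤ m := by
    have : 0 ≤ (42 + 6 * |c|) / a := by positivity
    linarith
  have ham : 42 + 6 * |c| ≤ a * m := by
    have : a * ((42 + 6 * |c|) / a) = 42 + 6 * |c| := by field_simp
    rw [hm]; nlinarith
  refine ⟨5 / 2 * m, ?_⟩
  intro x y hx hy hyx hzero
  set x0 : ℝ := x - y / 2 with hx0
  have hx0m : m ≤ x0 := by rw [hx0]; linarith
  set u : ℂ := 1 + 2 * I with hu
  have hure : u.re = 1 := by simp [hu]
  have huim : u.im = 2 := by simp [hu]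
  set A : ℝ → ℝ := fun s => (w (x0 + s * u)).re with hA
  set B : ℝ → ℝ := fun s => (w (x0 + s * u)).im with hB
  set A1 : ℝ → ℝ := fun s => (w1 (x0 + s * u)).re with hA1
  set B1 : ℝ → ℝ := fun s => (w1 (x0 + s * u)).im with hB1
  have dA : ∀ s, HasDerivAt A (A1 s - 2 * B1 s) s := fun s => by
    refine (hasDerivAt_re (hasDerivAt_line x0 u s (hw _))).congr_deriv ?_
    rw [mul_re, hure, huim]; simp only [hA1, hB1]; ring
  have dB : ∀ s, HasDerivAt B (2 * A1 s + B1 s) s := fun s => by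
    refine (hasDerivAt_im (hasDerivAt_line x0 u s (hw _))).congr_deriv ?_
    rw [mul_im, hure, huim]; simp only [hA1, hB1]; ring
  -- real and imaginary parts of Q
  set QR : ℝ → ℝ := fun s => a * (((x0 + s) ^ 2 - (2 * s) ^ 2) ^ 2 - (2 * (x0 + s) * (2 * s)) ^ 2)
    + b * ((x0 + s) ^ 2 - (2 * s) ^ 2) - c with hQR
  set QI : ℝ → ℝ := fun s => a * (2 * ((x0 + s) ^ 2 - (2 * s) ^ 2) * (2 * (x0 + s) * (2 * s)))
    + b * (2 * (x0 + s) * (2 * s)) with hQI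
  have hQ : ∀ s : ℝ, (a : ℂ) * (x0 + s * u) ^ 4 + (b : ℂ) * (x0 + s * u) ^ 2 - (c : ℂ)
      = (QR s : ℂ) + (QI s : ℂ) * I := by
    intro s
    simp only [hQR, hQI, hu]
    push_cast
    have hI : I ^ 2 = -1 := Complex.I_sq
    have hI3 : I ^ 3 = -I := by rw [pow_succ, hI]; ring
    have hI4 : I ^ 4 = 1 := Complex.I_pow_four
    ring_nf
    simp only [hI, hI3, hI4]
    ring
  have dA1 : ∀ s, HasDerivAt A1 (-(QR s * A s - QI s * B s) + 2 * (QR s * B s + QI s * A s)) s :=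
    fun s => by
      refine (hasDerivAt_re (hasDerivAt_line x0 u s (hw1 _))).congr_deriv ?_
      rw [hQ, mul_re, hure, huim, mul_re, mul_im]
      simp [hA, hB]; ring
  have dB1 : ∀ s, HasDerivAt B1 (-2 * (QR s * A s - QI s * B s) - (QR s * B s + QI s * A s)) s :=
    fun s => by
      refine (hasDerivAt_im (hasDerivAt_line x0 u s (hw1 _))).congr_deriv ?_
      rw [hQ, mul_im, hure, huim, mul_re, mul_im]
      simp [hA, hB]; ring
  set F : ℝ → ℝ := fun s => (B1 s * A s - A1 s * B s) * ((x0 + s) ^ 2 - (2 * s) ^ 2)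
    - 2 * (x0 + s) * (2 * s) * (A1 s * A s + B1 s * B s) with hF
  have d1 : ∀ s : ℝ, HasDerivAt (fun s => (x0 + s) ^ 2 - (2 * s) ^ 2) (2 * (x0 + s) - 8 * s) s :=
    fun s => by
      have := (((hasDerivAt_id s).const_add x0).pow 2).sub (((hasDerivAt_id s).const_mul 2).pow 2)
      refine this.congr_deriv ?_
      simp; ring
  have d2 : ∀ s : ℝ, HasDerivAt (fun s => 2 * (x0 + s) * (2 * s)) (4 * x0 + 8 * s) s :=
    fun s => by
      have := (((hasDerivAt_id s).const_add x0).const_mul 2).mul ((hasDerivAt_id s).const_mul 2)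
      refine this.congr_deriv ?_
      simp; ring
  have dF : ∀ s, HasDerivAt F _ s := fun s =>
    ((((dB1 s).mul (dA s)).sub ((dA1 s).mul (dB s))).mul (d1 s)).sub
      ((d2 s).mul (((dA1 s).mul (dA s)).add ((dB1 s).mul (dB s))))
  have hanti : StrictAntiOn F (Set.Icc 0 (y / 2)) := by
    refine strictAntiOn_of_deriv_neg (convex_Icc _ _)
      (fun s _ => (dF s).continuousAt.continuousWithinAt) ?_
    intro s hs
    rw [interior_Icc] at hs
    rw [(dF s).deriv]
    have hs1 := hs.1
    have hs2 := hs.2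
    have hX : m ≤ x0 + s := by linarith
    have hXY : m ≤ (x0 + s) ^ 2 + (2 * s) ^ 2 := by nlinarith
    have key := sector_real a b c (x0 + s) (2 * s) (A s) (B s) (A1 s) (B1 s) ha hb (by linarith)
      (by rw [hx0]; linarith) (by linarith) (by
        refine ham.trans ?_
        have : m ≤ ((x0 + s) ^ 2 + (2 * s) ^ 2) ^ 2 := by nlinarith
        gcongr) (by
        have hz := hne (x0 + s * u)
        by_contra hcon
        push Not at hcon
        have e1 : A s = 0 := by
          nlinarith [sq_nonneg (A s), sq_nonneg (B s), sq_nonneg (A1 s), sq_nonneg (B1 s)]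
        have e2 : B s = 0 := by
          nlinarith [sq_nonneg (A s), sq_nonneg (B s), sq_nonneg (A1 s), sq_nonneg (B1 s)]
        have e3 : A1 s = 0 := by
          nlinarith [sq_nonneg (A s), sq_nonneg (B s), sq_nonneg (A1 s), sq_nonneg (B1 s)]
        have e4 : B1 s = 0 := by
          nlinarith [sq_nonneg (A s), sq_nonneg (B s), sq_nonneg (A1 s), sq_nonneg (B1 s)]
        exact hz (Complex.ext e1 e2) (Complex.ext e3 e4))
    refine lt_of_eq_of_lt ?_ key
    simp only [hQR, hQI, Pi.sub_apply, Pi.mul_apply]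
    ring
  have h0 : F 0 = 0 := by
    have e1 : B 0 = 0 := by simp [hB, hr]
    have e2 : B1 0 = 0 := by simp [hB1, hr1]
    simp [hF, e1, e2]
  have hend : F (y / 2) = 0 := by
    have e : ((x0 : ℂ) + ((y / 2 : ℝ) : ℂ) * u) = x + y * I := by
      rw [hx0, hu]; push_cast; ring
    have e1 : A (y / 2) = 0 := by simp only [hA]; rw [e, hzero]; simp
    have e2 : B (y / 2) = 0 := by simp only [hB]; rw [e, hzero]; simp
    simp [hF, e1, e2]
  have := hanti ⟨le_rfl, by linarith⟩ ⟨by linarith, le_rfl⟩ (by linarith : (0 : ℝ) < y / 2)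
  linarith

/-- No zeros in the sector around the positive imaginary axis. -/
theorem upper (a b c : ℝ) (w w1 : ℂ → ℂ)
    (hw : ∀ z, HasDerivAt w (w1 z) z)
    (hw1 : ∀ z, HasDerivAt w1 (-((a : ℂ) * z ^ 4 + (b : ℂ) * z ^ 2 - (c : ℂ)) * w z) z)
    (x y : ℝ) (hx : 0 ≤ x) (hy : 0 < y) (hxy : b ≤ 2 * a * (y ^ 2 - x ^ 2)) (ha : 0 < a)
    (h0 : 0 < (w1 (y * I)).im * (w (y * I)).re - (w1 (y * I)).re * (w (y * I)).im) :
    w (x + y * I) ≠ 0 := by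
  intro hzero
  set A : ℝ → ℝ := fun s => (w (y * I + s * 1)).re with hA
  set B : ℝ → ℝ := fun s => (w (y * I + s * 1)).im with hB
  set A1 : ℝ → ℝ := fun s => (w1 (y * I + s * 1)).re with hA1
  set B1 : ℝ → ℝ := fun s => (w1 (y * I + s * 1)).im with hB1
  have dA : ∀ s, HasDerivAt A (A1 s) s := fun s => by
    refine (hasDerivAt_re (hasDerivAt_line (y * I) 1 s (hw _))).congr_deriv ?_
    rw [mul_one]
  have dB : ∀ s, HasDerivAt B (B1 s) s := fun s => by
    refine (hasDerivAt_im (hasDerivAt_line (y * I) 1 s (hw _))).congr_deriv ?_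
    rw [mul_one]
  set QR : ℝ → ℝ := fun s => a * ((s ^ 2 - y ^ 2) ^ 2 - (2 * s * y) ^ 2)
    + b * (s ^ 2 - y ^ 2) - c with hQR
  set QI : ℝ → ℝ := fun s => a * (2 * (s ^ 2 - y ^ 2) * (2 * s * y))
    + b * (2 * s * y) with hQI
  have hQ : ∀ s : ℝ, (a : ℂ) * (y * I + s * 1) ^ 4 + (b : ℂ) * (y * I + s * 1) ^ 2 - (c : ℂ)
      = (QR s : ℂ) + (QI s : ℂ) * I := by
    intro s
    simp only [hQR, hQI]
    push_cast
    have hI : I ^ 2 = -1 := Complex.I_sq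
    have hI3 : I ^ 3 = -I := by rw [pow_succ, hI]; ring
    have hI4 : I ^ 4 = 1 := Complex.I_pow_four
    ring_nf
    simp only [hI, hI3, hI4]
    ring
  have dA1 : ∀ s, HasDerivAt A1 (-(QR s * A s - QI s * B s)) s := fun s => by
    refine (hasDerivAt_re (hasDerivAt_line (y * I) 1 s (hw1 _))).congr_deriv ?_
    rw [mul_one (-_ * _), hQ, mul_re]
    simp [hA, hB]; ring
  have dB1 : ∀ s, HasDerivAt B1 (-(QR s * B s + QI s * A s)) s := fun s => by
    refine (hasDerivAt_im (hasDerivAt_line (y * I) 1 s (hw1 _))).congr_deriv ?_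
    rw [mul_one (-_ * _), hQ, mul_im]
    simp [hA, hB]; ring
  set F : ℝ → ℝ := fun s => B1 s * A s - A1 s * B s with hF
  have dF : ∀ s, HasDerivAt F _ s := fun s =>
    ((dB1 s).mul (dA s)).sub ((dA1 s).mul (dB s))
  have hmono : MonotoneOn F (Set.Icc 0 x) := by
    refine monotoneOn_of_deriv_nonneg (convex_Icc _ _)
      (fun s _ => (dF s).continuousAt.continuousWithinAt)
      (fun s _ => (dF s).differentiableAt.differentiableWithinAt) ?_
    intro s hs
    rw [interior_Icc] at hs
    rw [(dF s).deriv]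
    have e : -(QR s * B s + QI s * A s) * A s + B1 s * A1 s -
        (-(QR s * A s - QI s * B s) * B s + A1 s * B1 s)
        = (2 * s * y) * (2 * a * (y ^ 2 - s ^ 2) - b) * (A s ^ 2 + B s ^ 2) := by
      simp only [hQI]; ring
    rw [e]
    have h1 : s ^ 2 ≤ x ^ 2 := pow_le_pow_left₀ hs.1.le hs.2.le 2
    have h2 : 0 ≤ 2 * a * (y ^ 2 - s ^ 2) - b := by nlinarith
    have h3 := hs.1
    positivity
  have h1 := hmono ⟨le_rfl, hx⟩ ⟨hx, le_rfl⟩ hx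
  have h2 : F x = 0 := by
    have e : ((y : ℂ) * I + (x : ℂ) * 1) = x + y * I := by ring
    simp only [hF, hA, hB]
    rw [e, hzero]; simp
  have h3 : 0 < F 0 := by
    simp only [hF, hA, hB, hA1, hB1]
    simpa using h0
  linarith

lemma le_line {g g' : ℝ → ℝ} {x₁ k : ℝ} (hg : ∀ x, HasDerivAt g (g' x) x)
    (hk : ∀ x, x₁ ≤ x → g' x ≤ k) (x : ℝ) (hx : x₁ ≤ x) : g x ≤ g x₁ + k * (x - x₁) := by
  have hB : ∀ x, HasDerivAt (fun x => g x₁ + k * (x - x₁)) k x := fun x => by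
    simpa using (((hasDerivAt_id x).sub_const x₁).const_mul k).const_add (g x₁)
  exact image_le_of_deriv_right_le_deriv_boundary (a := x₁) (b := x)
    (fun s _ => (hg s).continuousAt.continuousWithinAt) (fun s _ => (hg s).hasDerivWithinAt)
    (by simp) (fun s _ => (hB s).continuousAt.continuousWithinAt)
    (fun s _ => (hB s).hasDerivWithinAt) (fun s hs => hk s hs.1) ⟨hx, le_rfl⟩

lemma no_positive {v p Q : ℝ → ℝ} (hv : ∀ x, HasDerivAt v (p x) x)
    (hp : ∀ x, HasDerivAt p (-Q x * v x) x) (X : ℝ) (hQ : ∀ x, X ≤ x → 1 ≤ Q x)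
    (hpos : ∀ x, X ≤ x → 0 < v x) : False := by
  have hpanti : ∀ x₁ x, X ≤ x₁ → x₁ ≤ x → p x ≤ p x₁ := by
    intro x₁ x h1 h2
    have := le_line (k := 0) hp (x₁ := x₁) (fun s hs => by
      nlinarith [hQ s (h1.trans hs), hpos s (h1.trans hs)]) x h2
    linarith
  have hp0 : ∀ x, X ≤ x → 0 ≤ p x := by
    intro x₁ h1
    by_contra hneg
    push Not at hneg
    have hvp := hpos x₁ h1
    have := le_line (k := p x₁) hv (x₁ := x₁) (fun s hs => hpanti x₁ s h1 hs)
      (x₁ + v x₁ / (-p x₁)) (by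
        have : 0 ≤ v x₁ / (-p x₁) := div_nonneg hvp.le (by linarith)
        linarith)
    have e : p x₁ * (x₁ + v x₁ / (-p x₁) - x₁) = - v x₁ := by
      have : p x₁ ≠ 0 := hneg.ne
      field_simp
      ring
    rw [e] at this
    have h2 := hpos (x₁ + v x₁ / (-p x₁)) (by
        have : 0 ≤ v x₁ / (-p x₁) := div_nonneg hvp.le (by linarith)
        linarith)
    linarith
  have hvm : ∀ x, X ≤ x → v X ≤ v x := by
    intro x hx
    have := le_line (g := fun x => - v x) (g' := fun x => - p x) (k := 0) (fun x => (hv x).neg)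
      (x₁ := X) (fun s hs => by linarith [hp0 s hs]) x hx
    linarith
  have hX := hpos X le_rfl
  have h0 := hp0 X le_rfl
  have hle : X ≤ X + (p X + 1) / v X := by
    have : 0 ≤ (p X + 1) / v X := by positivity
    linarith
  have := le_line (k := - v X) hp (x₁ := X) (fun s hs => by
    nlinarith [hQ s hs, hvm s hs]) (X + (p X + 1) / v X) hle
  have e : - v X * (X + (p X + 1) / v X - X) = - (p X + 1) := by
    field_simp
    ring
  rw [e] at this
  linarith [hp0 _ hle]

lemma infinite_zeros (a b c : ℝ) (ha : 0 < a) (hb : 0 ≤ b) (v p : ℝ → ℝ)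
    (hv : ∀ x, HasDerivAt v (p x) x)
    (hp : ∀ x, HasDerivAt p (-(a * x ^ 4 + b * x ^ 2 - c) * v x) x) :
    {x : ℝ | v x = 0}.Infinite := by
  intro hfin
  obtain ⟨M, hM⟩ := hfin.bddAbove
  set X : ℝ := max (M + 1) (1 + (1 + |c|) / a) with hX
  have hX1 : 1 + (1 + |c|) / a ≤ X := le_max_right _ _
  have hX2 : M + 1 ≤ X := le_max_left _ _
  have hQ : ∀ x, X ≤ x → 1 ≤ a * x ^ 4 + b * x ^ 2 - c := by
    intro x hx
    have h1 : 0 ≤ (1 + |c|) / a := by positivity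
    have h2 : (1 + |c|) / a ≤ x := by linarith
    rw [div_le_iff₀ ha] at h2
    have h3 : 1 ≤ x := by linarith
    have h4 : x ≤ x ^ 4 := le_self_pow₀ h3 (by norm_num)
    have h5 : 0 ≤ b * x ^ 2 := by positivity
    nlinarith [le_abs_self c]
  have hne : ∀ x, X ≤ x → v x ≠ 0 := by
    intro x hx h
    have := hM h
    linarith
  have hcont : Continuous v := continuous_iff_continuousAt.2 fun x => (hv x).continuousAt
  rcases lt_or_gt_of_ne (hne X le_rfl) with h | h
  · refine no_positive (v := fun x => - v x) (p := fun x => - p x) (fun x => (hv x).neg)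
      (Q := fun x => a * x ^ 4 + b * x ^ 2 - c)
      (fun x => (hp x).neg.congr_deriv (by ring)) X hQ ?_
    intro x hx
    by_contra hcon
    push Not at hcon
    obtain ⟨s, hs, hs0⟩ := intermediate_value_Icc hx hcont.continuousOn
      (⟨h.le, by linarith⟩ : (0 : ℝ) ∈ Set.Icc (v X) (v x))
    exact hne s hs.1 hs0
  · refine no_positive hv (Q := fun x => a * x ^ 4 + b * x ^ 2 - c) hp X hQ ?_
    intro x hx
    by_contra hcon
    push Not at hcon
    obtain ⟨s, hs, hs0⟩ := intermediate_value_Icc' hx hcont.continuousOn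
      (⟨hcon, h.le⟩ : (0 : ℝ) ∈ Set.Icc (v x) (v X))
    exact hne s hs.1 hs0

lemma finite_zeros {w : ℂ → ℂ} (hw : Differentiable ℂ w) (h0 : w 0 ≠ 0) (S : Set ℂ)
    (hS : ∀ z ∈ S, w z = 0) (R : ℝ) (hR : ∀ z ∈ S, ‖z‖ ≤ R) : S.Finite := by
  by_contra hinf
  obtain ⟨z, -, hz⟩ := Set.Infinite.exists_accPt_of_subset_isCompact (s := S) hinf
    (isCompact_closedBall (0 : ℂ) R) (fun z hz => by simpa using hR z hz)
  rw [accPt_iff_frequently_nhdsNE] at hz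
  have han : AnalyticOnNhd ℂ w Set.univ :=
    hw.differentiableOn.analyticOnNhd isOpen_univ
  have := han.eqOn_zero_of_preconnected_of_frequently_eq_zero isPreconnected_univ
    (Set.mem_univ z) (hz.mono fun y hy => hS y hy)
  exact h0 (this (Set.mem_univ 0))


end Quartic

open Quartic
/-- For `a > 0` and `b ≥ 0`, there are infinitely many real `c` such that
`w'' + (a·z⁴ + b·z² − c)·w = 0` has a nonzero entire solution with infinitely many zeros,
all but finitely many of them real. -/
theorem stmt_18 (a b : ℝ) (ha : 0 < a) (hb : 0 ≤ b) :
    {c : ℝ | ∃ w : ℂ → ℂ,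
        Differentiable ℂ w ∧ w ≠ 0 ∧
        (∀ z : ℂ, iteratedDeriv 2 w z
            + ((a : ℂ) * z ^ 4 + (b : ℂ) * z ^ 2 - (c : ℂ)) * w z = 0) ∧
        {z : ℂ | w z = 0}.Infinite ∧
        {z : ℂ | w z = 0 ∧ z.im ≠ 0}.Finite}.Infinite := by
  obtain ⟨W, W1, hW, hW1, cW, cW1, W0, W10, Wc, W1c, We, W1o⟩ := exists_family a b
  refine Set.infinite_of_not_bddAbove ?_
  rintro ⟨c₀, hc₀⟩
  -- values on the axes
  have imW : ∀ (c t : ℝ), (W c (t * I)).im = 0 := by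
    intro c t
    have h := Wc c (t * I)
    rw [map_mul, conj_I, conj_ofReal, mul_neg, We] at h
    have := congrArg Complex.im h
    rw [conj_im] at this
    linarith
  have reW : ∀ (c x : ℝ), (W c x).im = 0 := by
    intro c x
    have h := Wc c x
    rw [conj_ofReal] at h
    have := congrArg Complex.im h
    rw [conj_im] at this
    linarith
  have reW1 : ∀ (c x : ℝ), (W1 c x).im = 0 := by
    intro c x
    have h := W1c c x
    rw [conj_ofReal] at h
    have := congrArg Complex.im h
    rw [conj_im] at this
    linarith
  obtain ⟨c, hc, T, hT⟩ := shooting a b ha hb (fun c t => (W c (t * I)).re)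
    (fun c t => -(W1 c (t * I)).im)
    (by
      intro c t
      have h := hasDerivAt_re (hasDerivAt_line 0 I t (hW c _))
      simp only [zero_add] at h
      refine h.congr_deriv ?_
      simp)
    (by
      intro c t
      have h := (hasDerivAt_im (hasDerivAt_line 0 I t (hW1 c _))).neg
      simp only [zero_add] at h
      refine h.congr_deriv ?_
      have e : (a : ℂ) * (t * I) ^ 4 + (b : ℂ) * (t * I) ^ 2 - (c : ℂ)
          = ((a * t ^ 4 - b * t ^ 2 - c : ℝ) : ℂ) := by
        rw [mul_pow, mul_pow, Complex.I_pow_four, Complex.I_sq]; push_cast; ring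
      rw [e, ← ofReal_neg, mul_im, re_ofReal_mul, im_ofReal_mul, imW]
      simp only [I_im, I_re, mul_zero, mul_one, add_zero]
      ring)
    (by
      have : Continuous (fun x : ℝ × ℝ => W x.1 ((x.2 : ℂ) * I)) :=
        cW.comp (by fun_prop : Continuous fun x : ℝ × ℝ => (x.1, (x.2 : ℂ) * I))
      exact Complex.continuous_re.comp this)
    (by
      have : Continuous (fun x : ℝ × ℝ => W1 x.1 ((x.2 : ℂ) * I)) :=
        cW1.comp (by fun_prop : Continuous fun x : ℝ × ℝ => (x.1, (x.2 : ℂ) * I))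
      exact (Complex.continuous_im.comp this).neg)
    (by intro c; simp [W0]) (by intro c; simp [W10]) c₀
  have hdiff : Differentiable ℂ (W c) := fun z => (hW c z).differentiableAt
  refine absurd (hc₀ (show c ∈ _ from ⟨W c, hdiff, ?_, ?_, ?_, ?_⟩)) (not_le.2 hc)
  · intro h
    have := W0 c
    rw [h] at this
    simp at this
  · intro z
    have e : deriv (W c) = W1 c := funext fun z => (hW c z).deriv
    rw [iteratedDeriv_succ, iteratedDeriv_one, e, (hW1 c z).deriv]
    ring
  · have hinf := infinite_zeros a b c ha hb (fun x => (W c x).re) (fun x => (W1 c x).re)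
      (by
        intro x
        have h := hasDerivAt_re (hasDerivAt_line 0 1 x (hW c _))
        simpa using h)
      (by
        intro x
        have h := hasDerivAt_re (hasDerivAt_line 0 1 x (hW1 c _))
        simp only [zero_add, mul_one] at h
        refine h.congr_deriv ?_
        have e : (a : ℂ) * (x : ℂ) ^ 4 + (b : ℂ) * (x : ℂ) ^ 2 - (c : ℂ)
            = ((a * x ^ 4 + b * x ^ 2 - c : ℝ) : ℂ) := by push_cast; ring
        rw [e, ← ofReal_neg, re_ofReal_mul])
    refine (hinf.image (f := fun x : ℝ => (x : ℂ)) ofReal_injective.injOn).mono ?_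
    rintro _ ⟨x, hx, rfl⟩
    exact Complex.ext hx (reW c x)
  · have hne : ∀ z, W c z = 0 → W1 c z ≠ 0 := by
      intro z h0 h1
      have hg : ∀ t : ℝ, HasDerivAt (fun t : ℝ => W c (0 + t * z)) (W1 c (0 + t * z) * z) t :=
        fun t => hasDerivAt_line 0 z t (hW c _)
      have hh : ∀ t : ℝ, HasDerivAt (fun t : ℝ => W1 c (0 + t * z) * z)
          ((-((a : ℂ) * (0 + t * z) ^ 4 + (b : ℂ) * (0 + t * z) ^ 2 - (c : ℂ)) * z ^ 2)
            * W c (0 + t * z)) t :=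
        fun t => ((hasDerivAt_line 0 z t (hW1 c _)).mul_const z).congr_deriv (by ring)
      have := ode_unique hg hh (by fun_prop) 1 (by simp [h0]) (by simp [h1]) 0
      simp [W0] at this
    obtain ⟨X, hX⟩ := sector a b c ha hb (W c) (W1 c) (hW c) (hW1 c) hne (reW c) (reW1 c)
    set Y : ℝ := max (max T X) (1 + 2 * b / a) with hY
    have hYT : T ≤ Y := (le_max_left _ _).trans (le_max_left _ _)
    have hYX : X ≤ Y := (le_max_right _ _).trans (le_max_left _ _)
    have hYb : 1 + 2 * b / a ≤ Y := le_max_right _ _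
    have hba : 0 ≤ 2 * b / a := by positivity
    -- symmetry
    have hsym : ∀ z, W c z = 0 → W c ((|z.re| : ℝ) + (|z.im| : ℝ) * I) = 0 := by
      intro z hz
      have hconj : W c ((starRingEnd ℂ) z) = 0 := by rw [Wc, hz, map_zero]
      have hzz : z = z.re + z.im * I := (Complex.re_add_im z).symm
      have hcz : (starRingEnd ℂ) z = z.re - z.im * I := by
        apply Complex.ext <;> simp
      rcases abs_choice z.re with h1 | h1 <;> rcases abs_choice z.im with h2 | h2 <;> rw [h1, h2]
      · rw [← hzz]; exact hz
      · rw [← hconj, hcz]; congr 1; push_cast; ring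
      · rw [← hconj, hcz, ← We]; congr 1; push_cast; ring
      · rw [← hz, ← We]; congr 1
        conv_rhs => rw [hzz]
        push_cast; ring
    refine finite_zeros hdiff (by rw [W0]; exact one_ne_zero) _ (fun z hz => hz.1) (3 * Y) ?_
    rintro z ⟨hz, him⟩
    have hz' := hsym z hz
    have hy : 0 < |z.im| := abs_pos.2 him
    have hx : 0 ≤ |z.re| := abs_nonneg _
    set x := |z.re| with hxdef
    set y := |z.im| with hydef
    have hbound : x + y ≤ 3 * Y := by
      by_cases hcase : y ≤ 6 / 5 * x
      · by_cases hxX : X ≤ x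
        · exact absurd hz' (hX x y hxX hy hcase)
        · push Not at hxX
          linarith
      · push Not at hcase
        by_cases hyY : Y ≤ y
        · refine absurd hz' (upper a b c (W c) (W1 c) (hW c) (hW1 c) x y hx hy ?_ ha ?_)
          · have h1 : 2 * b / a ≤ y := by linarith
            rw [div_le_iff₀ ha] at h1
            have h2 : 1 ≤ y := by linarith
            have h3 : y ≤ y ^ 2 := by nlinarith
            have h4 : x ^ 2 ≤ 25 / 36 * y ^ 2 := by nlinarith
            have h5 : 11 / 36 * y ≤ y ^ 2 - x ^ 2 := by nlinarith
            have h6 : a * (11 / 36 * y) ≤ a * (y ^ 2 - x ^ 2) := by gcongr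
            nlinarith
          · rw [imW]
            have := hT y (by linarith)
            linarith
        · push Not at hyY
          linarith
    exact (Complex.norm_le_abs_re_add_abs_im z).trans hbound
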